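/- arXiv:2310.09920 — 3 statements merged into one kernel-verified Lean document; each statement's English description precedes it below -/
import Mathlib

section
/- (Theorem 1 of the paper.) Let p > 0, γ ≥ 0, u_max > 0, and Q^d_max ≥ p be real numbers, and suppose 0 < V ≤ (Q^d_max − p)·p/(u_max + γ·p). Let T_k ≥ 0, and let the download buffer evolve as Q^d(0) = 0, Q^d(k+1) = max(Q^d(k) − T_k, 0) + a_k with a_k ∈ {0, p}, where the download indicator is governed by the BONES rule: a_k = p only if there exist options i, j with segment size S_i > 0, processing time t^e(i,j) ≥ 0, utility U_k(i,j) ≤ u_max, and current enhancement buffer level Q^e(k) ≥ 0, such that Q^d(k)·p + Q^e(k)·t^e(i,j) − V·(U_k(i,j) + γ·p) ≤ 0. Then for all k, Q^d(k) ≤ V·(u_max + γ·p)/p + p, and in particular Q^d(k) ≤ Q^d_max. -/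
/-!
The bound is an invariant of the buffer recursion. Put `B = V (umax + γ p) / p`. In a slot without
a download the level does not rise above `max (Qd k) 0`. In a slot with a download, some option has
nonpositive score; since `Qe k * te i j ≥ 0` and `U k i j ≤ umax`, this gives `Qd k ≤ B`, and one
slot adds at most `p`. So `Qd k ≤ B + p` always, and the upper bound on `V` says `B + p ≤ Qdmax`.
-/

/-- Theorem 1 of the paper: Under the BONES download rule (a download occurs in
slot `k` only if some option `(i, j)` has nonpositive drift-plus-penalty score
`Q^d(k)·p + Q^e(k)·t^e(i,j) - V·(U_k(i,j) + γ·p) ≤ 0`), and with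
`0 < V ≤ (Q^d_max - p)·p / (u_max + γ·p)`, the download buffer satisfies
`Q^d(k) ≤ V·(u_max + γ·p)/p + p ≤ Q^d_max` for all `k`. -/
theorem bones_buffer_bound
    (I J : ℕ) (p γ umax Qdmax V : ℝ)
    (T a Qd Qe : ℕ → ℝ)
    (S : Fin I → ℝ) (te : Fin I → Fin J → ℝ) (U : ℕ → Fin I → Fin J → ℝ)
    (hp : 0 < p) (hγ : 0 ≤ γ) (humax : 0 < umax) (hQdmax : p ≤ Qdmax)
    (hV : 0 < V) (hVub : V ≤ (Qdmax - p) * p / (umax + γ * p))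
    (hT : ∀ k, 0 ≤ T k)
    (ha : ∀ k, a k = 0 ∨ a k = p)
    (hS : ∀ i, 0 < S i) (hte : ∀ i j, 0 ≤ te i j)
    (hU : ∀ k i j, U k i j ≤ umax) (hQe : ∀ k, 0 ≤ Qe k)
    (hQd0 : Qd 0 = 0)
    (hQd : ∀ k, Qd (k + 1) = max (Qd k - T k) 0 + a k)
    (hrule : ∀ k, a k = p →
      ∃ i j, Qd k * p + Qe k * te i j - V * (U k i j + γ * p) ≤ 0) :
    ∀ k, Qd k ≤ V * (umax + γ * p) / p + p ∧ Qd k ≤ Qdmax := by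
  have hden : 0 < umax + γ * p := by positivity
  have hB : 0 ≤ V * (umax + γ * p) / p := by positivity
  have hBmax : V * (umax + γ * p) / p + p ≤ Qdmax := by
    have h1 : V * (umax + γ * p) ≤ (Qdmax - p) * p := (le_div_iff₀ hden).mp hVub
    have h2 : V * (umax + γ * p) / p ≤ Qdmax - p := (div_le_iff₀ hp).mpr h1
    linarith
  have hbound : ∀ k, Qd k ≤ V * (umax + γ * p) / p + p := by
    intro k
    induction k with
    | zero => rw [hQd0]; linarith
    | succ k ih =>
      have hTk := hT k
      rw [hQd k]
      rcases ha k with h | h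
      · rw [h, add_zero]
        exact max_le (by linarith) (by linarith)
      · -- a download forces the buffer to be at most `V (umax + γ p) / p` beforehand
        obtain ⟨i, j, hij⟩ := hrule k h
        have hprod : 0 ≤ Qe k * te i j := mul_nonneg (hQe k) (hte i j)
        have hutil : V * (U k i j + γ * p) ≤ V * (umax + γ * p) :=
          mul_le_mul_of_nonneg_left (by linarith [hU k i j]) hV.le
        have hQk : Qd k ≤ V * (umax + γ * p) / p :=
          (le_div_iff₀ hp).mpr (by linarith)
        rw [h]
        have hmax : max (Qd k - T k) 0 ≤ V * (umax + γ * p) / p :=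
          max_le (by linarith) hB
        linarith
  exact fun k => ⟨hbound k, (hbound k).trans hBmax⟩
end

section
/- Let p > 0, t^e_max ≥ 0, and 0 < T_min ≤ T_max be real numbers. Let Q^d, Q^e : ℕ → ℝ satisfy Q^d(k), Q^e(k) ≥ 0, Q^d(k+1) = max(Q^d(k) − T_k, 0) + a_k, and Q^e(k+1) = max(Q^e(k) − T_k, 0) + b_k, where 0 ≤ a_k ≤ p, 0 ≤ b_k ≤ t^e_max, and T_min ≤ T_k ≤ T_max for all k. Define the Lyapunov function L(k) = (1/2)·(Q^d(k)^2 + Q^e(k)^2). Then for all k: (L(k+1) − L(k))/T_k ≤ (p^2 + (t^e_max)^2 + 2·T_min·T_max)/(2·T_min) + (Q^d(k)·(a_k − T_k) + Q^e(k)·(b_k − T_k))/T_k. -/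
/-!
Each squared queue grows in one slot by at most `x ^ 2 + t ^ 2 + 2 q (x - t)`
(`queue_sq_step_le`). Summing over the two queues and halving bounds the drift by
`(p ^ 2 + teMax ^ 2) / 2 + T k ^ 2` plus the cross terms; after division by `T k`, the bounds
`Tmin ≤ T k` and `T k ≤ Tmax` are applied to the first and second summand respectively.
-/

/-- One-step bound for a single queue, from `max (q - t) 0 ≤ q` and
`(max (q - t) 0) ^ 2 ≤ (q - t) ^ 2`. -/
lemma queue_sq_step_le {q t x : ℝ} (hq : 0 ≤ q) (ht : 0 ≤ t) (hx : 0 ≤ x) :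
    (max (q - t) 0 + x) ^ 2 ≤ q ^ 2 + x ^ 2 + t ^ 2 + 2 * (q * (x - t)) := by
  rcases max_cases (q - t) 0 with ⟨h, _⟩ | ⟨h, _⟩ <;> rw [h]
  · nlinarith [mul_nonneg ht hx]
  · nlinarith [sq_nonneg (q - t), mul_nonneg hq hx]

/-- Normalized two-queue quadratic Lyapunov drift bound for the BONES buffers,
with drift constant `(p^2 + (t^e_max)^2 + 2·T_min·T_max) / (2·T_min)`. -/
theorem bones_normalized_drift_bound
    (p teMax Tmin Tmax : ℝ) (T a b Qd Qe : ℕ → ℝ)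
    (hp : 0 < p) (hteMax : 0 ≤ teMax)
    (hTmin : 0 < Tmin) (hTminmax : Tmin ≤ Tmax)
    (hQd : ∀ k, 0 ≤ Qd k) (hQe : ∀ k, 0 ≤ Qe k)
    (hQdrec : ∀ k, Qd (k + 1) = max (Qd k - T k) 0 + a k)
    (hQerec : ∀ k, Qe (k + 1) = max (Qe k - T k) 0 + b k)
    (ha : ∀ k, 0 ≤ a k ∧ a k ≤ p)
    (hb : ∀ k, 0 ≤ b k ∧ b k ≤ teMax)
    (hT : ∀ k, Tmin ≤ T k ∧ T k ≤ Tmax)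
    (L : ℕ → ℝ) (hL : ∀ k, L k = (1 / 2) * (Qd k ^ 2 + Qe k ^ 2)) :
    ∀ k, (L (k + 1) - L k) / T k
      ≤ (p ^ 2 + teMax ^ 2 + 2 * Tmin * Tmax) / (2 * Tmin)
        + (Qd k * (a k - T k) + Qe k * (b k - T k)) / T k := by
  intro k
  obtain ⟨ha0, hap⟩ := ha k
  obtain ⟨hb0, hbt⟩ := hb k
  obtain ⟨hT1, hT2⟩ := hT k
  have hTpos : 0 < T k := hTmin.trans_le hT1
  have hd := queue_sq_step_le (hQd k) hTpos.le ha0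
  have he := queue_sq_step_le (hQe k) hTpos.le hb0
  rw [← hQdrec] at hd
  rw [← hQerec] at he
  have ha2 : a k ^ 2 ≤ p ^ 2 := pow_le_pow_left₀ ha0 hap 2
  have hb2 : b k ^ 2 ≤ teMax ^ 2 := pow_le_pow_left₀ hb0 hbt 2
  have hconst : (p ^ 2 + teMax ^ 2) / (2 * T k) + T k
      ≤ (p ^ 2 + teMax ^ 2 + 2 * Tmin * Tmax) / (2 * Tmin) := by
    have hsplit : (p ^ 2 + teMax ^ 2 + 2 * Tmin * Tmax) / (2 * Tmin)
        = (p ^ 2 + teMax ^ 2) / (2 * Tmin) + Tmax := by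
      field_simp
    rw [hsplit]
    gcongr
  calc (L (k + 1) - L k) / T k
      ≤ ((p ^ 2 + teMax ^ 2) / 2 + T k ^ 2
          + (Qd k * (a k - T k) + Qe k * (b k - T k))) / T k := by
        rw [hL, hL]
        gcongr
        linarith
    _ = (p ^ 2 + teMax ^ 2) / (2 * T k) + T k
          + (Qd k * (a k - T k) + Qe k * (b k - T k)) / T k := by
        field_simp
    _ ≤ _ := by gcongr
end

section
/- (Deterministic sample-path form of Theorem 2.) Let p > 0, t^e_max ≥ 0, 0 < T_min ≤ T_max, V > 0, γ ≥ 0, and real numbers ū*, s̄* be given, and set B = (p^2 + (t^e_max)^2 + 2·T_min·T_max)/(2·T_min). Let Q^d, Q^e : ℕ → ℝ satisfy Q^d(0) = Q^e(0) = 0, Q^d(k+1) = max(Q^d(k) − T_k, 0) + a_k, and Q^e(k+1) = max(Q^e(k) − T_k, 0) + b_k, with 0 ≤ a_k ≤ p, 0 ≤ b_k ≤ t^e_max, and T_min ≤ T_k ≤ T_max for all k. Let u_k denote the utility collected in slot k, and suppose that in every slot k the chosen decision satisfies the per-slot drift-plus-penalty guarantee: Q^d(k)·(a_k − T_k) + Q^e(k)·(b_k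 − T_k) − V·(u_k + γ·a_k) ≤ T_k·(B·0 + (−V)·(ū* + γ·s̄*)) , i.e., [Q^d(k)·(a_k − T_k) + Q^e(k)·(b_k − T_k) − V·(u_k + γ·a_k)]/T_k ≤ −V·(ū* + γ·s̄*). Then for every K ≥ 1, (Σ_{k=0}^{K−1} (u_k + γ·a_k))/(Σ_{k=0}^{K−1} T_k) ≥ ū* + γ·s̄* − B/V. -/
/-!
With the Lyapunov function `L(k) = (Qd(k)² + Qe(k)²) / 2`, one slot increases `L` by at most
`B * T k + Qd k * (a k - T k) + Qe k * (b k - T k)` (`queue_sq_le`, `slot_const_le`). The per-slot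
hypothesis turns this into `L(k+1) - L(k) ≤ T k * (B - V * (ustar + γ * sstar)) + V * r k`, where
`r k = u k + γ * a k`. Telescoping from `L(0) = 0` and using `L(K) ≥ 0`, then dividing by
`V * ∑ T k`, gives the bound.
-/

/-- Quadratic drift bound for a single queue. -/
lemma queue_sq_le {Q t x : ℝ} (hQ : 0 ≤ Q) (ht : 0 ≤ t) (hx : 0 ≤ x) :
    (max (Q - t) 0 + x) ^ 2 ≤ Q ^ 2 + t ^ 2 + x ^ 2 + 2 * Q * (x - t) := by
  rcases le_total (Q - t) 0 with h | h
  · rw [max_eq_right h]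
    nlinarith [sq_nonneg (Q - t), mul_nonneg hQ hx]
  · rw [max_eq_left h]
    nlinarith [mul_nonneg ht hx]

/-- The second-order drift terms of one slot are at most `B * t`: the arrival terms are rescaled
by `t / Tmin ≥ 1`, and `t ^ 2 ≤ Tmax * t`. -/
lemma slot_const_le {p q Tmin Tmax t x y : ℝ} (hTmin : 0 < Tmin)
    (hx : 0 ≤ x) (hxp : x ≤ p) (hy : 0 ≤ y) (hyq : y ≤ q) (ht : Tmin ≤ t) (htM : t ≤ Tmax) :
    t ^ 2 + (x ^ 2 + y ^ 2) / 2 ≤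
      (p ^ 2 + q ^ 2 + 2 * Tmin * Tmax) / (2 * Tmin) * t := by
  have hx2 : x ^ 2 ≤ p ^ 2 := pow_le_pow_left₀ hx hxp 2
  have hy2 : y ^ 2 ≤ q ^ 2 := pow_le_pow_left₀ hy hyq 2
  have h1 : (p ^ 2 + q ^ 2) * Tmin ≤ (p ^ 2 + q ^ 2) * t :=
    mul_le_mul_of_nonneg_left ht (by positivity)
  have h2 : t * t ≤ Tmax * t := mul_le_mul_of_nonneg_right htM (hTmin.le.trans ht)
  have h3 : Tmin * (t * t) ≤ Tmin * (Tmax * t) := mul_le_mul_of_nonneg_left h2 hTmin.le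
  have h4 : (x ^ 2 + y ^ 2) * Tmin ≤ (p ^ 2 + q ^ 2) * Tmin :=
    mul_le_mul_of_nonneg_right (add_le_add hx2 hy2) hTmin.le
  rw [div_mul_eq_mul_div, le_div_iff₀ (by positivity)]
  linarith

lemma queue_nonneg {Q T x : ℕ → ℝ} (h0 : Q 0 = 0)
    (hrec : ∀ k, Q (k + 1) = max (Q k - T k) 0 + x k) (hx : ∀ k, 0 ≤ x k) (k : ℕ) :
    0 ≤ Q k := by
  cases k with
  | zero => exact h0.ge
  | succ k =>
    rw [hrec]
    exact add_nonneg (le_max_right _ _) (hx k)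

open Finset in
/-- deterministic sample-path form of Theorem 2 of the paper: if in every slot
the normalized drift-plus-penalty of the chosen decision is at most `-V·(ū* + γ·s̄*)`, then
the time-average utility-plus-smoothness reward is at least `ū* + γ·s̄* - B/V`, with
`B = (p^2 + (t^e_max)^2 + 2·T_min·T_max) / (2·T_min)`. -/
theorem bones_performance_bound
    (p teMax Tmin Tmax V γ ustar sstar B : ℝ)
    (T a b u Qd Qe : ℕ → ℝ)
    (hp : 0 < p) (hteMax : 0 ≤ teMax)
    (hTmin : 0 < Tmin) (hTminmax : Tmin ≤ Tmax)
    (hV : 0 < V) (hγ : 0 ≤ γ)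
    (hB : B = (p ^ 2 + teMax ^ 2 + 2 * Tmin * Tmax) / (2 * Tmin))
    (hQd0 : Qd 0 = 0) (hQe0 : Qe 0 = 0)
    (hQdrec : ∀ k, Qd (k + 1) = max (Qd k - T k) 0 + a k)
    (hQerec : ∀ k, Qe (k + 1) = max (Qe k - T k) 0 + b k)
    (ha : ∀ k, 0 ≤ a k ∧ a k ≤ p)
    (hb : ∀ k, 0 ≤ b k ∧ b k ≤ teMax)
    (hT : ∀ k, Tmin ≤ T k ∧ T k ≤ Tmax)
    (hslot : ∀ k,
      (Qd k * (a k - T k) + Qe k * (b k - T k) - V * (u k + γ * a k)) / T k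
        ≤ -V * (ustar + γ * sstar)) :
    ∀ K : ℕ, 1 ≤ K →
      (∑ k ∈ range K, (u k + γ * a k)) / (∑ k ∈ range K, T k)
        ≥ ustar + γ * sstar - B / V := by
  have hTpos : ∀ k, 0 < T k := fun k => hTmin.trans_le (hT k).1
  have hdrift : ∀ K : ℕ, (Qd K ^ 2 + Qe K ^ 2) / 2 ≤
      (B - V * (ustar + γ * sstar)) * ∑ k ∈ range K, T k
        + V * ∑ k ∈ range K, (u k + γ * a k) := by
    intro K
    induction K with
    | zero => simp [hQd0, hQe0]
    | succ K ih =>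
      have hd := queue_sq_le (queue_nonneg hQd0 hQdrec (fun k => (ha k).1) K)
        (hTpos K).le (ha K).1
      have he := queue_sq_le (queue_nonneg hQe0 hQerec (fun k => (hb k).1) K)
        (hTpos K).le (hb K).1
      have hc := slot_const_le hTmin (ha K).1 (ha K).2 (hb K).1 (hb K).2 (hT K).1 (hT K).2
      have hs := (div_le_iff₀ (hTpos K)).1 (hslot K)
      rw [← hQdrec] at hd
      rw [← hQerec] at he
      rw [← hB] at hc
      rw [sum_range_succ, sum_range_succ]
      linarith
  intro K hK
  have hS : 0 < ∑ k ∈ range K, T k :=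
    sum_pos (fun k _ => hTpos k) (nonempty_range_iff.2 (by omega))
  have hL : 0 ≤ (Qd K ^ 2 + Qe K ^ 2) / 2 := by positivity
  have h := hL.trans (hdrift K)
  rw [ge_iff_le, le_div_iff₀ hS]
  refine le_of_mul_le_mul_left ?_ hV
  have hVB : V * ((ustar + γ * sstar - B / V) * ∑ k ∈ range K, T k) =
      (V * (ustar + γ * sstar) - B) * ∑ k ∈ range K, T k := by
    field_simp
  rw [hVB]
  linarith
end
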